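/- (Theorem 5.) Consider the batch test that accepts H_1 if and only if T(x_1^s) = Σ_k |E_{P̂_s}[ψ_k] − E_{Q̂_0}[ψ_k]|² − Σ_k |E_{P̂_s}[ψ_k] − E_{Q̂_1}[ψ_k]|² ≥ 0. If δ := inf_{P_0 ∈ 𝒫_0^η} Σ_k [(E_{Q̂_1}[ψ_k] − E_{P_0}[ψ_k])² − (E_{Q̂_0}[ψ_k] − E_{P_0}[ψ_k])²] > 0, then the worst-case type-I error decays exponentially in the batch size s: sup_{P_0 ∈ 𝒫_0^η} P_0^{⊗s}(T(x_1^s) ≥ 0) ≤ exp( − s δ² / (8 M² (Σ_k |E_{Q̂_1}[ψ_k] − E_{Q̂_0}[ψ_k]|)²) ). -/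

import Mathlib

open MeasureTheory

/-- The moment-constrained uncertainty set under `H₀` around nominal `Q0`. -/
def momentSet {d : ℕ} (X : Set (EuclideanSpace ℝ (Fin d))) {K : ℕ}
    (ψ : Fin K → X → ℝ) (Q0 : ProbabilityMeasure X) (η : ℝ) :
    Set (ProbabilityMeasure X) :=
  {P | ∀ k, |∫ x, ψ k x ∂(P : Measure X) - ∫ x, ψ k x ∂(Q0 : Measure X)| ≤ η}

/-- **Hoeffding inequality** for i.i.d. samples of a bounded function `g` with values in
`[-B, B]`. -/
theorem measureReal_pi_sum_sub_integral_ge_le {α : Type*} [MeasurableSpace α] (P : Measure α)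
    [IsProbabilityMeasure P] {g : α → ℝ} (hg : Measurable g) {B : ℝ} (hB : ∀ x, |g x| ≤ B)
    (s : ℕ) {ε : ℝ} (hε : 0 ≤ ε) :
    (Measure.pi fun _ : Fin s => P).real {ω | ε ≤ ∑ j, (g (ω j) - ∫ x, g x ∂P)} ≤
      Real.exp (-ε ^ 2 / (2 * (s * B ^ 2))) := by
  have hsub := ProbabilityTheory.hasSubgaussianMGF_of_mem_Icc (μ := P) hg.aemeasurable
    (ae_of_all _ fun x => Set.mem_Icc.2 (abs_le.1 (hB x)))
  have hindep : ProbabilityTheory.iIndepFun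
      (fun (j : Fin s) (ω : Fin s → α) => g (ω j) - ∫ x, g x ∂P) (Measure.pi fun _ => P) :=
    ProbabilityTheory.iIndepFun_pi (X := fun _ x => g x - ∫ x, g x ∂P)
      fun _ => (hg.sub_const _).aemeasurable
  have hpi (j : Fin s) : ProbabilityTheory.HasSubgaussianMGF
      (fun ω : Fin s → α => g (ω j) - ∫ x, g x ∂P) ((‖B - -B‖₊ / 2) ^ 2)
      (Measure.pi fun _ => P) := by
    have hev := measurePreserving_eval (fun _ : Fin s => P) j
    exact .of_map (X := fun x => g x - ∫ x, g x ∂P) hev.measurable.aemeasurable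
      (hev.map_eq.symm ▸ hsub)
  have h := ProbabilityTheory.HasSubgaussianMGF.measure_sum_ge_le_of_iIndepFun hindep
    (s := Finset.univ) (fun j _ => hpi j) hε
  have hc : (|B + B| / 2) ^ 2 = B ^ 2 := by
    rw [div_pow, sq_abs]; ring
  simpa [hc] using h

/-- A positive real infimum is a lower bound. -/
theorem Real.sInf_le_of_mem_of_sInf_pos {S : Set ℝ} (hS : 0 < sInf S) {r : ℝ} (hr : r ∈ S) :
    sInf S ≤ r := by
  refine csInf_le ?_ hr
  by_contra h
  exact hS.ne' (Real.sInf_of_not_bddBelow h)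

/-- **Theorem 5, exponential consistency of the direct batch test.**
If `δ = inf_{P₀ ∈ 𝒫₀^η} ∑_k [(E_{Q̂₁}[ψ_k] − E_{P₀}[ψ_k])² − (E_{Q̂₀}[ψ_k] − E_{P₀}[ψ_k])²] > 0`,
then the worst-case type-I error of the test accepting `H₁` iff
`T(x_1^s) = ∑_k |E_{P̂_s}[ψ_k] − E_{Q̂₀}[ψ_k]|² − ∑_k |E_{P̂_s}[ψ_k] − E_{Q̂₁}[ψ_k]|² ≥ 0`
decays exponentially in the batch size `s`. -/
theorem direct_batch_test_exponentially_consistent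
    {d : ℕ} (X : Set (EuclideanSpace ℝ (Fin d))) (hX : IsCompact X)
    {K : ℕ} (ψ : Fin K → X → ℝ) (hψ : ∀ k, Continuous (ψ k))
    (M : ℝ) (hM : ∀ k, ∀ x : X, |ψ k x| ≤ M)
    (Q0 Q1 : ProbabilityMeasure X) (η : ℝ) (hη : 0 < η)
    (E0 E1 : Fin K → ℝ)
    (hE0 : ∀ k, E0 k = ∫ x, ψ k x ∂(Q0 : Measure X))
    (hE1 : ∀ k, E1 k = ∫ x, ψ k x ∂(Q1 : Measure X))
    (δ : ℝ)
    (hδdef : δ = sInf {r : ℝ | ∃ P0 ∈ momentSet X ψ Q0 η,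
      r = ∑ k, ((E1 k - ∫ x, ψ k x ∂(P0 : Measure X)) ^ 2 -
        (E0 k - ∫ x, ψ k x ∂(P0 : Measure X)) ^ 2)})
    (hδ : 0 < δ)
    (s : ℕ) (hs : 0 < s) :
    (⨆ P0 ∈ momentSet X ψ Q0 η,
        (Measure.pi fun _ : Fin s => (P0 : Measure X))
          {ω : Fin s → X |
            ∑ k, |(s : ℝ)⁻¹ * ∑ j, ψ k (ω j) - E1 k| ^ 2 ≤
              ∑ k, |(s : ℝ)⁻¹ * ∑ j, ψ k (ω j) - E0 k| ^ 2}) ≤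
      ENNReal.ofReal (Real.exp (-(s : ℝ) * δ ^ 2 /
        (8 * M ^ 2 * (∑ k, |E1 k - E0 k|) ^ 2))) := by
  refine iSup₂_le fun P hP => ?_
  have hV : δ ≤ ∑ k, ((E1 k - ∫ x, ψ k x ∂(P : Measure X)) ^ 2 -
      (E0 k - ∫ x, ψ k x ∂(P : Measure X)) ^ 2) := by
    rw [hδdef] at hδ ⊢
    exact Real.sInf_le_of_mem_of_sInf_pos hδ ⟨P, hP, rfl⟩
  have hs' : (s : ℝ) ≠ 0 := by positivity
  set g : X → ℝ := fun x => ∑ k, 2 * (E1 k - E0 k) * ψ k x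
  have hgm : Measurable g :=
    (continuous_finsetSum _ fun k _ => (hψ k).const_mul _).measurable
  have hgB (x : X) : |g x| ≤ 2 * M * ∑ k, |E1 k - E0 k| := by
    rw [Finset.mul_sum]
    refine (Finset.abs_sum_le_sum_abs _ _).trans (Finset.sum_le_sum fun k _ => ?_)
    rw [abs_mul, abs_mul, abs_two]
    nlinarith [mul_le_mul_of_nonneg_left (hM k x) (abs_nonneg (E1 k - E0 k))]
  have hint : ∫ x, g x ∂(P : Measure X) =
      ∑ k, 2 * (E1 k - E0 k) * ∫ x, ψ k x ∂(P : Measure X) := by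
    rw [integral_finsetSum]
    · simp_rw [integral_const_mul]
    · exact fun k _ => (Integrable.of_bound (hψ k).measurable.aestronglyMeasurable M
        (ae_of_all _ (hM k))).const_mul _
  have hsum (ω : Fin s → X) : ∑ j, (g (ω j) - ∫ x, g x ∂(P : Measure X)) =
      s * ((∑ k, |(s : ℝ)⁻¹ * ∑ j, ψ k (ω j) - E0 k| ^ 2 -
        ∑ k, |(s : ℝ)⁻¹ * ∑ j, ψ k (ω j) - E1 k| ^ 2) +
        ∑ k, ((E1 k - ∫ x, ψ k x ∂(P : Measure X)) ^ 2 -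
          (E0 k - ∫ x, ψ k x ∂(P : Measure X)) ^ 2)) := by
    rw [Finset.sum_sub_distrib, Finset.sum_comm, hint, Finset.sum_const, Finset.card_univ,
      Fintype.card_fin, nsmul_eq_mul, Finset.mul_sum, ← Finset.sum_sub_distrib,
      ← Finset.sum_sub_distrib, ← Finset.sum_add_distrib, Finset.mul_sum]
    refine Finset.sum_congr rfl fun k _ => ?_
    rw [← Finset.mul_sum, sq_abs, sq_abs]
    field_simp
    ring
  have hsubset : {ω : Fin s → X | ∑ k, |(s : ℝ)⁻¹ * ∑ j, ψ k (ω j) - E1 k| ^ 2 ≤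
      ∑ k, |(s : ℝ)⁻¹ * ∑ j, ψ k (ω j) - E0 k| ^ 2} ⊆
      {ω | s * δ ≤ ∑ j, (g (ω j) - ∫ x, g x ∂(P : Measure X))} := by
    intro ω hω
    rw [Set.mem_ofPred_eq] at hω ⊢
    rw [hsum]
    gcongr
    linarith
  refine (measure_mono hsubset).trans ?_
  rw [← ofReal_measureReal]
  refine ENNReal.ofReal_le_ofReal
    ((measureReal_pi_sum_sub_integral_ge_le _ hgm hgB s (by positivity)).trans_eq ?_)
  congr 1
  rw [← mul_div_mul_left (-(s : ℝ) * δ ^ 2) _ hs']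
  congr 1 <;> ring
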